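/- Let (X, w) be a tight Euclidean 2e-design on the union S of p concentric spheres in ℝⁿ, with ε_S = 1 if 0 ∈ S and ε_S = 0 otherwise. Then for any two distinct points u, v ∈ X, Σ_{1 ≤ l ≤ e, 0 ≤ j ≤ min{p − ε_S − 1, ⌊(e−l)/2⌋}} ‖u‖^l ‖v‖^l g_{l,j}(u) g_{l,j}(v) Q_l(⟨u,v⟩/(‖u‖‖v‖)) + Σ_{j=0}^{min{p−1, ⌊e/2⌋}} g_{0,j}(u) g_{0,j}(v) = 0 (when u = 0 or v = 0, each term of the first sum is interpreted as 0, since ‖u‖^l‖v‖^l = 0). -/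

import Mathlib

/-!
Write `S` for the union of the spheres supporting `X`, and let `F_k`, `k = (l, j, i)`, be the
polynomials `g_{l,j}(|x|²) φ_{l,i}(x)` with `l ≤ e` and `j < min (p, ⌊(e - l)/2⌋ + 1)`; they have
degree at most `e`. The identity says that the off-diagonal entries of the kernel
`∑_k F_k(u) F_k(v)` on `X × X` vanish, the sum over `i` being evaluated by the addition formula.
It follows from two facts.

* The `F_k` are orthonormal in `L²(X, w)`. The design property replaces the sum over `X` of
  `F_k F_k'` by averages over spheres (`sphAvg_harm`), where the `φ_{l,i}` are orthonormal, and what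
  remains is the orthonormality of the `g_{l,j}`. Orthogonality between different degrees `l ≠ m`
  (`sphInner_harm_ne`) is a form of Green's identity: rotation invariance of Hausdorff measure gives
  `∫ (x_i ∂_j - x_j ∂_i) f = 0` (`integral_rotDer`), and summing such identities (`sum_rotDer`)
  gives `∫ ∇f·∇g = l (n + l + m - 2) ∫ f g`, whose left side is symmetric in `f` and `g`.
* The `F_k` span `Pol_e(S)`. Every polynomial is a combination of `|x|^{2j} h` with `h` harmonic
  (`mem_harmSum`), and on the `p` spheres `|x|^{2j}` is a combination of the `g_{l,j'}` with
  `j' ≤ j` and `j' < p` (`exists_radial_coeff_on`).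

Orthonormality gives at most `|X|` indices `k`; spanning and tightness give at least `|X|`. So the
matrices `A = (F_k(x))` and `B = (w(x) F_k(x))` with `A B = 1` are square, whence `B A = 1`, and its
off-diagonal entries are the claim.

Orthonormality of the `φ_{0,i}` already forces the surface measure of the unit sphere to be finite
and nonzero and `n ≥ 1`, and orthonormality of `g_{1,0}, …, g_{1,p-1}` excludes `0 ∈ X` when
`e ≥ 1`, so the correction `ε` in the range of `j` plays no role.
-/

open MeasureTheory Metric Finset
open scoped Classical RealInnerProductSpace

noncomputable section

/-- Euclidean `n`-space `ℝⁿ`. -/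
abbrev Euc (n : ℕ) := EuclideanSpace ℝ (Fin n)

/-- Evaluation of a multivariate polynomial at a point of `ℝⁿ`. -/
def evalPt {n : ℕ} (x : Euc n) (p : MvPolynomial (Fin n) ℝ) : ℝ :=
  MvPolynomial.eval (fun i => x i) p

/-- The normalized average (with respect to the `O(n)`-invariant surface measure,
i.e. the `(n-1)`-dimensional Hausdorff measure) of `f` over the sphere of radius `r`
centered at the origin; for `r = 0` it is `f 0`. -/
def sphAvg (n : ℕ) (r : ℝ) (f : Euc n → ℝ) : ℝ :=
  if r = 0 then f 0
  else ⨍ y in Metric.sphere (0 : Euc n) r, f y ∂(μH[(n : ℝ) - 1])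

/-- `(X, w)` is a Euclidean `t`-design in `ℝⁿ`:
`∑ᵢ (w(Xᵢ)/|Sᵢ|) ∫_{Sᵢ} f dσᵢ = ∑_{x ∈ X} w(x) f(x)` for all polynomials `f` of
degree at most `t`, where the `Sᵢ` are the concentric spheres supporting `X`. -/
def IsEuclideanDesign (n t : ℕ) (X : Finset (Euc n)) (w : Euc n → ℝ) : Prop :=
  ∀ p : MvPolynomial (Fin n) ℝ, p.totalDegree ≤ t →
    ∑ r ∈ X.image (fun x => ‖x‖),
        (∑ x ∈ X.filter (fun x => ‖x‖ = r), w x) * sphAvg n r (fun y => evalPt y p)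
      = ∑ x ∈ X, w x * evalPt x p

/-- Restriction of polynomials to a subset `S ⊆ ℝⁿ`, as a linear map. -/
def polyRestrict (n : ℕ) (S : Set (Euc n)) :
    MvPolynomial (Fin n) ℝ →ₗ[ℝ] (S → ℝ) where
  toFun p := fun x => evalPt (x : Euc n) p
  map_add' p q := by funext x; simp [evalPt]
  map_smul' c p := by funext x; simp [evalPt, MvPolynomial.smul_eval]

/-- `Pol_e(S)`: the space of restrictions to `S` of polynomials of total degree at most `e`. -/
def PolOn (n e : ℕ) (S : Set (Euc n)) : Submodule ℝ (S → ℝ) :=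
  (MvPolynomial.restrictTotalDegree (Fin n) ℝ e).map (polyRestrict n S)

/-- `dim Pol_e(S)`. -/
def dimPolOn (n e : ℕ) (S : Set (Euc n)) : ℕ := Module.finrank ℝ (PolOn n e S)

/-- The union of the concentric spheres (centered at the origin) supporting `X`. -/
def suppSpheres (n : ℕ) (X : Finset (Euc n)) : Set (Euc n) :=
  ⋃ r ∈ X.image (fun x => ‖x‖), Metric.sphere (0 : Euc n) r

/-- `(X, w)` is a tight Euclidean `2e`-design on `S` (the union of the concentric
spheres supporting `X`): it is a Euclidean `2e`-design with `|X| = dim Pol_e(S)`. -/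
def IsTightOnS (n e : ℕ) (X : Finset (Euc n)) (w : Euc n → ℝ) : Prop :=
  IsEuclideanDesign n (2 * e) X w ∧ X.card = dimPolOn n e (suppSpheres n X)

/-- `(X, w)` is a tight Euclidean `2e`-design: tight on `S` and moreover
`dim Pol_e(S) = dim Pol_e(ℝⁿ) = C(n+e, e)`. -/
def IsTightDesign (n e : ℕ) (X : Finset (Euc n)) (w : Euc n → ℝ) : Prop :=
  IsTightOnS n e X w ∧ dimPolOn n e (suppSpheres n X) = (n + e).choose e

/-- The Laplacian `Δ = ∑ᵢ ∂²/∂xᵢ²` on polynomials, as a linear map. -/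
def lap (n : ℕ) : MvPolynomial (Fin n) ℝ →ₗ[ℝ] MvPolynomial (Fin n) ℝ :=
  ∑ i : Fin n, ((MvPolynomial.pderiv i).toLinearMap ∘ₗ (MvPolynomial.pderiv i).toLinearMap)

/-- `Harm_l(ℝⁿ)`: the space of homogeneous harmonic polynomials of degree `l`. -/
def harmSub (n l : ℕ) : Submodule ℝ (MvPolynomial (Fin n) ℝ) :=
  MvPolynomial.homogeneousSubmodule (Fin n) ℝ l ⊓ LinearMap.ker (lap n)

/-- The normalized inner product `⟨φ, ψ⟩ = (1/|S^{n-1}|) ∫_{S^{n-1}} φψ dσ` of two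
polynomials over the unit sphere. -/
def sphInner (n : ℕ) (φ ψ : MvPolynomial (Fin n) ℝ) : ℝ :=
  ⨍ x in Metric.sphere (0 : Euc n) 1, (evalPt x φ * evalPt x ψ) ∂(μH[(n : ℝ) - 1])

/-! ### The normalized surface measure -/

/-- The normalized Hausdorff surface measure of the unit sphere, so that `sphInner` is the integral
of the product against it. It is a probability measure as soon as the surface measure of the sphere
is finite and nonzero, and otherwise it is junk. -/
def sphMeas (n : ℕ) : Measure (Euc n) :=
  ((μH[(n : ℝ) - 1]).restrict (Metric.sphere (0 : Euc n) 1) Set.univ)⁻¹ •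
    (μH[(n : ℝ) - 1]).restrict (Metric.sphere (0 : Euc n) 1)

lemma sphInner_eq (n : ℕ) (f g : MvPolynomial (Fin n) ℝ) :
    sphInner n f g = ∫ x, evalPt x f * evalPt x g ∂(sphMeas n) := rfl

lemma ae_sphMeas (n : ℕ) : ∀ᵐ x ∂(sphMeas n), ‖x‖ = 1 := by
  refine Measure.ae_smul_measure ?_ _
  filter_upwards [ae_restrict_mem (μ := μH[(n : ℝ) - 1])
    (Metric.isClosed_sphere (x := (0 : Euc n)) (ε := 1)).measurableSet] with x hx
  simpa using hx

lemma integral_sphMeas_comp {n : ℕ} (R : Euc n ≃ₗᵢ[ℝ] Euc n) (f : Euc n → ℝ) :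
    ∫ x, f (R x) ∂(sphMeas n) = ∫ x, f x ∂(sphMeas n) := by
  unfold sphMeas
  rw [integral_smul_measure, integral_smul_measure]
  congr 1
  have h := R.toIsometryEquiv.measurePreserving_hausdorffMeasure ((n : ℝ) - 1)
  have h2 := h.setIntegral_preimage_emb R.toHomeomorph.measurableEmbedding f
    (Metric.sphere (0 : Euc n) 1)
  have h3 : R.toIsometryEquiv ⁻¹' (Metric.sphere (0 : Euc n) 1) = Metric.sphere 0 1 := by
    ext x; simp
  rw [h3] at h2
  exact h2

lemma sphAvg_eq {n : ℕ} (hn : 1 ≤ n) {r : ℝ} (hr : 0 < r) (f : Euc n → ℝ) :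
    sphAvg n r f = ∫ x, f (r • x) ∂(sphMeas n) := by
  have hd : (0 : ℝ) ≤ (n : ℝ) - 1 := by
    have : (1 : ℝ) ≤ n := by exact_mod_cast hn
    linarith
  set d : ℝ := (n : ℝ) - 1
  set c : NNReal := ‖r‖₊ ^ d with hc
  have hcpos : c ≠ 0 := by
    have : 0 < ‖r‖₊ := by simpa using hr.ne'
    exact (NNReal.rpow_pos this).ne'
  have hemb : MeasurableEmbedding (fun x : Euc n => r • x) :=
    (Homeomorph.smulOfNeZero r hr.ne').measurableEmbedding
  -- the surface measure of radius `r` is a multiple of the dilated unit surface measure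
  have key : (μH[d] : Measure (Euc n)).restrict (Metric.sphere 0 r)
      = c • ((μH[d] : Measure (Euc n)).restrict (Metric.sphere 0 1)).map (fun x => r • x) := by
    ext s hs
    rw [Measure.restrict_apply hs, Measure.smul_apply, hemb.map_apply,
      Measure.restrict_apply (hemb.measurable hs), hc,
      ← Measure.hausdorffMeasure_smul₀ hd hr.ne']
    congr 1
    ext x
    rw [Set.mem_smul_set_iff_inv_smul_mem₀ hr.ne']
    simp only [Set.mem_inter_iff, mem_sphere_iff_norm, sub_zero, Set.mem_preimage,
      smul_inv_smul₀ hr.ne', norm_smul, norm_inv, Real.norm_eq_abs, abs_of_pos hr]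
    rw [inv_mul_eq_one₀ hr.ne', eq_comm (a := r)]
  have e1 : ∫ x, f (r • x) ∂(sphMeas n)
      = ⨍ x in Metric.sphere (0 : Euc n) 1, f (r • x) ∂μH[d] := rfl
  rw [e1, sphAvg, if_neg hr.ne', average_eq, average_eq]
  change _ • (∫ y, f y ∂((μH[d] : Measure (Euc n)).restrict (Metric.sphere 0 r))) = _
  have hreal : ((μH[d] : Measure (Euc n)).restrict (Metric.sphere 0 r)).real Set.univ
      = c * ((μH[d] : Measure (Euc n)).restrict (Metric.sphere 0 1)).real Set.univ := by
    rw [key, measureReal_nnreal_smul_apply, map_measureReal_apply hemb.measurable .univ,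
      Set.preimage_univ]
  rw [hreal, key, integral_smul_nnreal_measure, hemb.integral_map, NNReal.smul_def]
  have : (c : ℝ) ≠ 0 := by exact_mod_cast hcpos
  simp only [smul_eq_mul, mul_inv]
  field_simp

lemma isProbabilityMeasure_sphMeas {n : ℕ} (h : ∫ _, (1 : ℝ) ∂(sphMeas n) ≠ 0) :
    IsProbabilityMeasure (sphMeas n) := by
  constructor
  set ν := (μH[(n : ℝ) - 1]).restrict (Metric.sphere (0 : Euc n) 1) with hν
  have e : sphMeas n Set.univ = (ν Set.univ)⁻¹ * ν Set.univ := by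
    simp [sphMeas, hν]
  rw [e]
  refine ENNReal.inv_mul_cancel ?_ ?_
  · intro h0
    apply h
    rw [integral_const, measureReal_def, e, h0]; simp
  · intro h0
    apply h
    rw [integral_const, measureReal_def, e, h0]; simp

lemma continuous_evalPt {n : ℕ} (f : MvPolynomial (Fin n) ℝ) :
    Continuous (fun x : Euc n => evalPt x f) := by
  unfold evalPt
  exact (MvPolynomial.continuous_eval f).comp (by fun_prop)

lemma exists_bound_evalPt {n : ℕ} (f : MvPolynomial (Fin n) ℝ) :
    ∃ C, ∀ x : Euc n, ‖x‖ = 1 → ‖evalPt x f‖ ≤ C := by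
  obtain ⟨C, hC⟩ := (isCompact_sphere (0 : Euc n) 1).exists_bound_of_continuousOn
    (continuous_evalPt f).continuousOn
  exact ⟨C, fun x hx => hC x (by simpa using hx)⟩

lemma integrable_evalPt {n : ℕ} [IsProbabilityMeasure (sphMeas n)]
    (f : MvPolynomial (Fin n) ℝ) : Integrable (fun x : Euc n => evalPt x f) (sphMeas n) := by
  obtain ⟨C, hC⟩ := exists_bound_evalPt f
  refine Integrable.of_bound (continuous_evalPt f).aestronglyMeasurable C ?_
  filter_upwards [ae_sphMeas n] with x hx using hC x hx

/-! ### Rotation invariance of spherical averages -/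

/-- The rotation by the angle `θ` in the coordinate plane `(i, j)`. -/
def planeRot {n : ℕ} {i j : Fin n} (hij : i ≠ j) (θ : ℝ) : Euc n ≃ₗᵢ[ℝ] Euc n :=
  LinearIsometry.toLinearIsometryEquiv
    { toFun := fun x => WithLp.toLp 2 (fun k =>
        if k = i then Real.cos θ * x i - Real.sin θ * x j
        else if k = j then Real.sin θ * x i + Real.cos θ * x j else x k)
      map_add' := by
        intro x y; ext k
        simp only [PiLp.add_apply]
        split_ifs <;> ring
      map_smul' := by
        intro c x; ext k
        simp only [PiLp.smul_apply, smul_eq_mul, RingHom.id_apply]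
        split_ifs <;> ring
      norm_map' := by
        intro x
        rw [EuclideanSpace.norm_eq, EuclideanSpace.norm_eq]
        congr 1
        rw [← sub_eq_zero, ← Finset.sum_sub_distrib,
          ← Finset.sum_subset (Finset.subset_univ ({i, j} : Finset (Fin n))),
          Finset.sum_pair hij]
        · have := Real.sin_sq_add_cos_sq θ
          simp [hij.symm]
          linear_combination (x.ofLp i ^ 2 + x.ofLp j ^ 2) * this
        · intro k _ hk
          simp only [Finset.mem_insert, Finset.mem_singleton, not_or] at hk
          simp [hk.1, hk.2] } rfl

lemma planeRot_apply {n : ℕ} {i j : Fin n} (hij : i ≠ j) (θ : ℝ) (x : Euc n) (k : Fin n) :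
    planeRot hij θ x k = if k = i then Real.cos θ * x i - Real.sin θ * x j
        else if k = j then Real.sin θ * x i + Real.cos θ * x j else x k := rfl

lemma hasDerivAt_eval {n : ℕ} (c : ℝ → Fin n → ℝ) (c' : Fin n → ℝ) (θ : ℝ)
    (hc : ∀ k, HasDerivAt (fun t => c t k) (c' k) θ) (f : MvPolynomial (Fin n) ℝ) :
    HasDerivAt (fun t => MvPolynomial.eval (c t) f)
      (∑ k, c' k * MvPolynomial.eval (c θ) (MvPolynomial.pderiv k f)) θ := by
  induction f using MvPolynomial.induction_on with
  | C a => simpa using hasDerivAt_const θ a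
  | add p q hp hq =>
    simp only [map_add, mul_add, Finset.sum_add_distrib]
    exact hp.add hq
  | mul_X p m hp =>
    simp only [map_mul, MvPolynomial.eval_X]
    refine (hp.mul (hc m)).congr_deriv ?_
    simp only [Derivation.leibniz, MvPolynomial.pderiv_X, smul_eq_mul, map_add, map_mul,
      MvPolynomial.eval_X, mul_add, Finset.sum_add_distrib, Finset.sum_mul]
    rw [add_comm]
    congr 1
    · rw [Finset.sum_eq_single m]
      · simp [mul_comm]
      · intro b _ hb; simp [hb.symm]
      · simp
    · exact Finset.sum_congr rfl fun k _ => by ring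

/-- The infinitesimal rotation `x_i ∂_j - x_j ∂_i`. -/
def rotDer {n : ℕ} (i j : Fin n) (f : MvPolynomial (Fin n) ℝ) : MvPolynomial (Fin n) ℝ :=
  MvPolynomial.X i * MvPolynomial.pderiv j f - MvPolynomial.X j * MvPolynomial.pderiv i f

lemma hasDerivAt_planeRot {n : ℕ} {i j : Fin n} (hij : i ≠ j) (x : Euc n)
    (f : MvPolynomial (Fin n) ℝ) (θ : ℝ) :
    HasDerivAt (fun t => evalPt (planeRot hij t x) f)
      (evalPt (planeRot hij θ x) (rotDer i j f)) θ := by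
  have h := hasDerivAt_eval (fun t k => planeRot hij t x k)
    (fun k => if k = i then - planeRot hij θ x j
      else if k = j then planeRot hij θ x i else 0) θ ?_ f
  · refine h.congr_deriv ?_
    rw [← Finset.sum_subset (Finset.subset_univ ({i, j} : Finset (Fin n))),
          Finset.sum_pair hij]
    · simp [evalPt, rotDer, hij.symm]; ring
    · intro k _ hk
      simp only [Finset.mem_insert, Finset.mem_singleton, not_or] at hk
      simp [hk.1, hk.2]
  · intro k
    simp only [planeRot_apply, if_true, if_neg hij.symm]
    split_ifs
    · refine (((Real.hasDerivAt_cos θ).mul_const _).sub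
        ((Real.hasDerivAt_sin θ).mul_const _)).congr_deriv ?_
      ring
    · refine (((Real.hasDerivAt_sin θ).mul_const _).add
        ((Real.hasDerivAt_cos θ).mul_const _)).congr_deriv ?_
      ring
    · exact hasDerivAt_const _ _

/-- Infinitesimal form of rotation invariance, obtained by differentiating
`θ ↦ ∫ f (R_θ x)`, which is constant, under the integral sign at `θ = 0`. -/
lemma integral_rotDer {n : ℕ} [IsProbabilityMeasure (sphMeas n)] (i j : Fin n)
    (f : MvPolynomial (Fin n) ℝ) : ∫ x, evalPt x (rotDer i j f) ∂(sphMeas n) = 0 := by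
  by_cases hij : i = j
  · subst hij; simp [rotDer, evalPt]
  have hcont : ∀ (p : MvPolynomial (Fin n) ℝ) (θ : ℝ),
      Continuous fun x : Euc n => evalPt (planeRot hij θ x) p := fun p θ =>
    (continuous_evalPt p).comp (planeRot hij θ).continuous
  obtain ⟨C, hC⟩ := exists_bound_evalPt (rotDer i j f)
  obtain ⟨D, hD⟩ := exists_bound_evalPt f
  have h := hasDerivAt_integral_of_dominated_loc_of_deriv_le (μ := sphMeas n) (𝕜 := ℝ)
    (F := fun θ x => evalPt (planeRot hij θ x) f)
    (F' := fun θ x => evalPt (planeRot hij θ x) (rotDer i j f))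
    (bound := fun _ => C) (x₀ := 0) (s := Set.univ) Filter.univ_mem
    (Filter.Eventually.of_forall fun θ => (hcont f θ).aestronglyMeasurable)
    (Integrable.of_bound (hcont f 0).aestronglyMeasurable D
      (by filter_upwards [ae_sphMeas n] with x hx using hD _ (by simpa using hx)))
    (hcont _ 0).aestronglyMeasurable
    (by filter_upwards [ae_sphMeas n] with x hx θ _ using hC _ (by simpa using hx))
    (integrable_const C)
    (Filter.Eventually.of_forall fun x θ _ => hasDerivAt_planeRot hij x f θ)
  have h2 := h.2
  simp only [integral_sphMeas_comp (planeRot hij _) (fun x => evalPt x f),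
    integral_sphMeas_comp (planeRot hij _) (fun x => evalPt x (rotDer i j f))] at h2
  exact h2.unique (hasDerivAt_const _ _)

/-! ### Orthogonality of harmonic polynomials of different degrees -/

/-- The squared norm `∑ᵢ xᵢ²` as a polynomial. -/
def nsq (n : ℕ) : MvPolynomial (Fin n) ℝ := ∑ i, MvPolynomial.X i ^ 2

lemma evalPt_nsq {n : ℕ} (x : Euc n) : evalPt x (nsq n) = ‖x‖ ^ 2 := by
  simp [evalPt, nsq, EuclideanSpace.norm_sq_eq]

lemma isHomogeneous_nsq (n : ℕ) : (nsq n).IsHomogeneous 2 :=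
  MvPolynomial.IsHomogeneous.sum _ _ _ fun i _ => MvPolynomial.isHomogeneous_X_pow i 2

lemma lap_apply {n : ℕ} (f : MvPolynomial (Fin n) ℝ) :
    lap n f = ∑ i, MvPolynomial.pderiv i (MvPolynomial.pderiv i f) := by
  simp [lap]

open MvPolynomial in
lemma pderiv_comm {n : ℕ} (i j : Fin n) (f : MvPolynomial (Fin n) ℝ) :
    pderiv i (pderiv j f) = pderiv j (pderiv i f) := by
  have h : ⁅pderiv (R := ℝ) i, pderiv (R := ℝ) j⁆ = 0 := by
    apply MvPolynomial.derivation_ext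
    intro k
    simp [Derivation.commutator_apply, pderiv_X, Pi.single_apply, apply_ite]
  have h2 := congrArg (fun D => D f) h
  simpa [Derivation.commutator_apply, sub_eq_zero] using h2

open MvPolynomial in
lemma euler {n l : ℕ} {f : MvPolynomial (Fin n) ℝ} (hf : f.IsHomogeneous l) :
    ∑ i, X i * pderiv i f = C (l : ℝ) * f := by
  rw [hf.sum_X_mul_pderiv, nsmul_eq_mul]; simp

open MvPolynomial in
/-- Summing infinitesimal rotations of `x_i g ∂_j f` produces `|x|² ∇f·∇g` up to a multiple of
`f g`; this is the first-order form of Green's identity on the sphere. -/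
lemma sum_rotDer {n : ℕ} {l m : ℕ} {f g : MvPolynomial (Fin n) ℝ} (hf : f.IsHomogeneous l)
    (hg : g.IsHomogeneous m) (hlap : lap n f = 0) :
    ∑ i, ∑ j, rotDer i j (X i * g * pderiv j f)
      = nsq n * (∑ j, pderiv j g * pderiv j f)
        - C ((l : ℝ) * (n + l + m - 2)) * (f * g) := by
  have ef := euler hf
  have eg := euler hg
  have eff : ∀ j, ∑ i, X i * pderiv i (pderiv j f) = C ((l : ℝ) - 1) * pderiv j f := by
    intro j
    have := congrArg (pderiv j) ef
    simp only [map_sum, Derivation.leibniz, pderiv_X, smul_eq_mul, pderiv_C,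
      Finset.sum_add_distrib, Pi.single_apply, mul_ite, mul_one, mul_zero, add_zero] at this
    rw [Finset.sum_ite_eq' ] at this
    simp only [Finset.mem_univ, if_true] at this
    simp only [pderiv_comm _ j, map_sub, map_one]
    linear_combination this
  have T1 : ∑ i, ∑ j, X i * ((Pi.single j 1 : Fin n → MvPolynomial (Fin n) ℝ) i * (g * pderiv j f))
      = C (l : ℝ) * (f * g) := by
    have : ∀ i, ∑ j, X i * ((Pi.single j 1 : Fin n → MvPolynomial (Fin n) ℝ) i * (g * pderiv j f))
        = g * (X i * pderiv i f) := fun i => by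
      rw [Finset.sum_eq_single i]
      · simp; ring
      · intro b _ hb; simp [hb.symm]
      · simp
    simp only [this, ← Finset.mul_sum, ef]; ring
  have T2 : ∑ i : Fin n, ∑ j, X i ^ 2 * (pderiv j g * pderiv j f)
      = nsq n * ∑ j, pderiv j g * pderiv j f := by
    rw [nsq, Finset.sum_mul_sum]
  have T3 : ∑ i : Fin n, ∑ j, X i ^ 2 * (g * pderiv j (pderiv j f)) = 0 := by
    rw [lap_apply] at hlap
    simp only [← Finset.mul_sum, hlap, mul_zero, Finset.sum_const_zero]
  have T4 : ∑ _i : Fin n, ∑ j, X j * (g * pderiv j f) = C ((n : ℝ) * l) * (f * g) := by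
    simp only [mul_left_comm _ g, ← Finset.mul_sum, ef]
    simp; ring
  have T5 : ∑ i : Fin n, ∑ j, (X i * pderiv i g) * (X j * pderiv j f)
      = C ((m : ℝ) * l) * (f * g) := by
    rw [← Finset.sum_mul_sum, ef, eg, C_mul]; ring
  have T6 : ∑ i : Fin n, ∑ j, X j * (g * (X i * pderiv i (pderiv j f)))
      = C (((l : ℝ) - 1) * l) * (f * g) := by
    rw [Finset.sum_comm]
    simp only [← Finset.mul_sum, eff]
    have : ∀ j : Fin n, X j * (g * (C ((l : ℝ) - 1) * pderiv j f))
        = (g * C ((l : ℝ) - 1)) * (X j * pderiv j f) := fun j => by ring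
    simp only [this, ← Finset.mul_sum, ef, C_mul]; ring
  have expand : ∀ i j : Fin n, rotDer i j (X i * g * pderiv j f)
      = X i * ((Pi.single j 1 : Fin n → MvPolynomial (Fin n) ℝ) i * (g * pderiv j f))
        + X i ^ 2 * (pderiv j g * pderiv j f) + X i ^ 2 * (g * pderiv j (pderiv j f))
        - X j * (g * pderiv j f) - (X i * pderiv i g) * (X j * pderiv j f)
        - X j * (g * (X i * pderiv i (pderiv j f))) := by
    intro i j
    simp only [rotDer, Derivation.leibniz, pderiv_X, smul_eq_mul, Pi.single_eq_same]
    ring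
  simp only [expand, Finset.sum_add_distrib, Finset.sum_sub_distrib, T1, T2, T3, T4, T5, T6]
  simp only [map_mul, map_add, map_sub, map_one, map_ofNat]
  ring

lemma evalPt_sum {n : ℕ} {ι : Type*} (s : Finset ι) (f : ι → MvPolynomial (Fin n) ℝ) (x : Euc n) :
    evalPt x (∑ i ∈ s, f i) = ∑ i ∈ s, evalPt x (f i) := by simp [evalPt]

lemma evalPt_mul {n : ℕ} (f g : MvPolynomial (Fin n) ℝ) (x : Euc n) :
    evalPt x (f * g) = evalPt x f * evalPt x g := by simp [evalPt]

lemma evalPt_C {n : ℕ} (c : ℝ) (x : Euc n) :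
    evalPt x (MvPolynomial.C c : MvPolynomial (Fin n) ℝ) = c := by simp [evalPt]

lemma evalPt_smul {n l : ℕ} {f : MvPolynomial (Fin n) ℝ} (hf : f.IsHomogeneous l) (r : ℝ)
    (x : Euc n) : evalPt (r • x) f = r ^ l * evalPt x f := by
  unfold evalPt
  rw [MvPolynomial.eval_eq, MvPolynomial.eval_eq, Finset.mul_sum]
  refine Finset.sum_congr rfl fun d hd => ?_
  rw [hf.degree_eq_sum_deg_support hd]
  simp only [PiLp.smul_apply, smul_eq_mul, mul_pow, Finset.prod_mul_distrib,
    Finset.prod_pow_eq_pow_sum]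
  ring

open MvPolynomial in
lemma integral_grad {n : ℕ} [IsProbabilityMeasure (sphMeas n)] {l m : ℕ}
    {f g : MvPolynomial (Fin n) ℝ} (hf : f.IsHomogeneous l)
    (hg : g.IsHomogeneous m) (hlap : lap n f = 0) :
    ∫ x, evalPt x (∑ j, pderiv j g * pderiv j f) ∂(sphMeas n)
      = (l : ℝ) * (n + l + m - 2) * ∫ x, evalPt x (f * g) ∂(sphMeas n) := by
  have h0 : ∫ x, evalPt x (∑ i, ∑ j, rotDer i j (X i * g * pderiv j f)) ∂(sphMeas n) = 0 := by
    simp only [evalPt_sum]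
    rw [integral_finsetSum _ fun i _ => integrable_finsetSum _ fun j _ => integrable_evalPt _]
    refine Finset.sum_eq_zero fun i _ => ?_
    rw [integral_finsetSum _ fun j _ => integrable_evalPt _]
    exact Finset.sum_eq_zero fun j _ => integral_rotDer i j _
  rw [sum_rotDer hf hg hlap] at h0
  have h1 : ∫ x, evalPt x (nsq n * (∑ j, pderiv j g * pderiv j f)
        - C ((l : ℝ) * (n + l + m - 2)) * (f * g)) ∂(sphMeas n)
      = ∫ x, (evalPt x (∑ j, pderiv j g * pderiv j f)
        - (l : ℝ) * (n + l + m - 2) * evalPt x (f * g)) ∂(sphMeas n) := by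
    refine integral_congr_ae ?_
    filter_upwards [ae_sphMeas n] with x hx
    have : evalPt x (nsq n * (∑ j, pderiv j g * pderiv j f)
        - C ((l : ℝ) * (n + l + m - 2)) * (f * g))
        = evalPt x (nsq n) * evalPt x (∑ j, pderiv j g * pderiv j f)
          - evalPt x (C ((l : ℝ) * (n + l + m - 2))) * evalPt x (f * g) := by
      simp only [evalPt, map_sub, map_mul]
    rw [this, evalPt_nsq, hx, evalPt_C]; ring
  rw [h1, integral_sub (integrable_evalPt _) ((integrable_evalPt _).const_mul _),
    integral_const_mul] at h0
  linarith

lemma integral_odd {n d : ℕ} {f : MvPolynomial (Fin n) ℝ} (hf : f.IsHomogeneous d)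
    (hd : Odd d) : ∫ x, evalPt x f ∂(sphMeas n) = 0 := by
  have h := integral_sphMeas_comp (LinearIsometryEquiv.neg ℝ) (fun x : Euc n => evalPt x f)
  have h2 : ∀ x : Euc n, evalPt (-x) f = - evalPt x f := fun x => by
    have := evalPt_smul hf (-1) x
    rwa [neg_one_smul, hd.neg_one_pow, neg_one_mul] at this
  simp only [LinearIsometryEquiv.coe_neg, h2, integral_neg] at h
  linarith

/-- Harmonic polynomials of degrees `l ≠ m` are orthogonal on the sphere: exchanging the two
polynomials in `integral_grad` gives `(l - m) (n + l + m - 2) ∫ f g = 0`. The factor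
`n + l + m - 2` can only vanish for `n = 1`, `{l, m} = {0, 1}`, where parity concludes. -/
lemma sphInner_harm_ne {n : ℕ} (hn : 1 ≤ n) [IsProbabilityMeasure (sphMeas n)] {l m : ℕ}
    (hlm : l ≠ m) {f g : MvPolynomial (Fin n) ℝ} (hf : f ∈ harmSub n l) (hg : g ∈ harmSub n m) :
    sphInner n f g = 0 := by
  obtain ⟨hf1, hf2⟩ := hf
  obtain ⟨hg1, hg2⟩ := hg
  rw [SetLike.mem_coe, MvPolynomial.mem_homogeneousSubmodule] at hf1 hg1
  rw [SetLike.mem_coe, LinearMap.mem_ker] at hf2 hg2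
  rw [sphInner_eq]
  simp only [← evalPt_mul]
  have h1 := integral_grad hf1 hg1 hf2
  have h2 := integral_grad hg1 hf1 hg2
  simp only [mul_comm (MvPolynomial.pderiv _ f), mul_comm g f] at h2
  rw [h1] at h2
  have h3 : ((l : ℝ) - m) * (n + l + m - 2) * ∫ x, evalPt x (f * g) ∂(sphMeas n) = 0 := by
    linear_combination h2
  rcases mul_eq_zero.1 h3 with h | h
  · rcases mul_eq_zero.1 h with h | h
    · exact absurd (by exact_mod_cast sub_eq_zero.1 h) hlm
    · have : n + l + m = 2 := by
        have : ((n + l + m : ℕ) : ℝ) = (2 : ℕ) := by push_cast; linarith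
        exact_mod_cast this
      have h1 : l + m = 1 := by omega
      exact integral_odd (hf1.mul hg1) (by rw [h1]; exact odd_one)
  · exact h

/-! ### Harmonic decomposition of polynomials -/

open MvPolynomial in
lemma lap_nsq_mul {n l : ℕ} {f : MvPolynomial (Fin n) ℝ} (hf : f.IsHomogeneous l) :
    lap n (nsq n * f) = C (2 * (n : ℝ) + 4 * l) * f + nsq n * lap n f := by
  have d1 : ∀ i : Fin n, pderiv i (nsq n) = 2 * X i := fun i => by
    simp only [nsq, map_sum, Derivation.leibniz_pow, pderiv_X]
    rw [Finset.sum_eq_single i]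
    · simp
    · intro b _ hb; simp [hb]
    · simp
  have d2 : ∀ i : Fin n, pderiv i (pderiv i (nsq n * f))
      = 2 * f + 4 * (X i * pderiv i f) + nsq n * pderiv i (pderiv i f) := fun i => by
    have two : pderiv i (2 : MvPolynomial (Fin n) ℝ) = 0 := by
      rw [← map_ofNat (C (R := ℝ) (σ := Fin n))]; exact pderiv_C
    simp only [Derivation.leibniz, map_add, d1, smul_eq_mul, two, pderiv_X_self]
    ring
  rw [lap_apply, lap_apply]
  simp only [d2, Finset.sum_add_distrib, ← Finset.mul_sum, euler hf]
  simp only [Finset.sum_const, Finset.card_univ, Fintype.card_fin, nsmul_eq_mul, map_add, map_mul,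
    map_ofNat, map_natCast]
  ring

lemma isHomogeneous_nsq_pow_mul {n l : ℕ} {f : MvPolynomial (Fin n) ℝ} (hf : f.IsHomogeneous l)
    (j : ℕ) : (nsq n ^ j * f).IsHomogeneous (2 * j + l) :=
  ((isHomogeneous_nsq n).pow j).mul hf

/-- `Δ (|x|^{2j+2} h)` is a positive multiple of `|x|^{2j} h` for harmonic `h`. -/
lemma lap_nsq_pow_mul {n l : ℕ} (hn : 1 ≤ n) {h : MvPolynomial (Fin n) ℝ}
    (hh : h ∈ harmSub n l) (j : ℕ) :
    ∃ c : ℝ, 0 < c ∧ lap n (nsq n ^ (j + 1) * h) = MvPolynomial.C c * (nsq n ^ j * h) := by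
  obtain ⟨h1, h2⟩ := hh
  rw [SetLike.mem_coe, MvPolynomial.mem_homogeneousSubmodule] at h1
  rw [SetLike.mem_coe, LinearMap.mem_ker] at h2
  have hn' : (0 : ℝ) < n := by exact_mod_cast hn
  induction j with
  | zero =>
    refine ⟨2 * (n : ℝ) + 4 * l, by positivity, ?_⟩
    rw [zero_add, pow_one, lap_nsq_mul h1, h2, mul_zero, add_zero, pow_zero, one_mul]
  | succ j ih =>
    obtain ⟨c, hc, e⟩ := ih
    refine ⟨2 * (n : ℝ) + 4 * ((2 * (j + 1) + l : ℕ) : ℝ) + c, by positivity, ?_⟩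
    rw [pow_succ' _ (j + 1), mul_assoc, lap_nsq_mul (isHomogeneous_nsq_pow_mul h1 (j + 1)), e]
    simp only [map_add]
    ring

/-- The span of the polynomials `|x|^{2j} h` with `h` harmonic homogeneous of degree `l` and
`2j + l = m`. -/
def harmSum (n m : ℕ) : Submodule ℝ (MvPolynomial (Fin n) ℝ) :=
  Submodule.span ℝ {f | ∃ j l h, 2 * j + l = m ∧ h ∈ harmSub n l ∧ f = nsq n ^ j * h}

lemma exists_lap_eq {n m : ℕ} (hn : 1 ≤ n) {f : MvPolynomial (Fin n) ℝ} (hf : f ∈ harmSum n m) :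
    ∃ F ∈ harmSum n (m + 2), lap n F = f := by
  induction hf using Submodule.span_induction with
  | mem f hf =>
    obtain ⟨j, l, h, hjl, hh, rfl⟩ := hf
    obtain ⟨c, hc, e⟩ := lap_nsq_pow_mul hn hh j
    refine ⟨c⁻¹ • (nsq n ^ (j + 1) * h), Submodule.smul_mem _ _
      (Submodule.subset_span ⟨j + 1, l, h, by omega, hh, rfl⟩), ?_⟩
    rw [map_smul, e, ← MvPolynomial.smul_eq_C_mul, smul_smul, inv_mul_cancel₀ hc.ne', one_smul]
  | zero => exact ⟨0, Submodule.zero_mem _, map_zero _⟩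
  | add f g _ _ hf hg =>
    obtain ⟨F, hF, rfl⟩ := hf
    obtain ⟨G, hG, rfl⟩ := hg
    exact ⟨F + G, Submodule.add_mem _ hF hG, map_add _ _ _⟩
  | smul c f _ hf =>
    obtain ⟨F, hF, rfl⟩ := hf
    exact ⟨c • F, Submodule.smul_mem _ _ hF, map_smul _ _ _⟩

lemma isHomogeneous_of_mem_harmSum {n m : ℕ} {f : MvPolynomial (Fin n) ℝ}
    (hf : f ∈ harmSum n m) : f.IsHomogeneous m := by
  rw [← MvPolynomial.mem_homogeneousSubmodule]
  refine Submodule.span_le.2 ?_ hf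
  rintro f ⟨j, l, h, rfl, hh, rfl⟩
  exact isHomogeneous_nsq_pow_mul ((MvPolynomial.mem_homogeneousSubmodule _ _).1 hh.1) j

lemma isHomogeneous_lap {n m : ℕ} {f : MvPolynomial (Fin n) ℝ} (hf : f.IsHomogeneous (m + 2)) :
    (lap n f).IsHomogeneous m := by
  rw [lap_apply]
  exact MvPolynomial.IsHomogeneous.sum _ _ _ fun i _ => hf.pderiv.pderiv

/-- Harmonic decomposition: subtracting from `f` an element of `harmSum` with the same Laplacian
leaves a harmonic polynomial. -/
lemma mem_harmSum {n : ℕ} (hn : 1 ≤ n) (m : ℕ) : ∀ {f : MvPolynomial (Fin n) ℝ},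
    f.IsHomogeneous m → f ∈ harmSum n m := by
  have harm_mem : ∀ {m : ℕ} {h : MvPolynomial (Fin n) ℝ}, h ∈ harmSub n m → h ∈ harmSum n m :=
    fun {m h} hh => Submodule.subset_span ⟨0, m, h, by omega, hh, by simp⟩
  induction m using Nat.strong_induction_on with
  | _ m ih =>
    intro f hf
    rcases Nat.lt_or_ge m 2 with hm | hm
    · refine harm_mem ⟨(MvPolynomial.mem_homogeneousSubmodule _ _).2 hf, ?_⟩
      rw [SetLike.mem_coe, LinearMap.mem_ker, lap_apply]
      refine Finset.sum_eq_zero fun i _ => ?_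
      have h0 : (MvPolynomial.pderiv i f).IsHomogeneous 0 := by
        have := hf.pderiv (i := i)
        rwa [show m - 1 = 0 by omega] at this
      rw [← MvPolynomial.totalDegree_zero_iff_isHomogeneous,
        MvPolynomial.totalDegree_eq_zero_iff_eq_C] at h0
      rw [h0, MvPolynomial.pderiv_C]
    · obtain ⟨k, rfl⟩ : ∃ k, m = k + 2 := ⟨m - 2, by omega⟩
      obtain ⟨F, hF, e⟩ := exists_lap_eq hn (ih k (by omega) (isHomogeneous_lap hf))
      have : f - F ∈ harmSub n (k + 2) := by
        refine ⟨(MvPolynomial.mem_homogeneousSubmodule _ _).2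
          (hf.sub (isHomogeneous_of_mem_harmSum hF)), ?_⟩
        rw [SetLike.mem_coe, LinearMap.mem_ker, map_sub, e, sub_self]
      simpa using Submodule.add_mem _ (harm_mem this) hF

/-! ### Bases of harmonic polynomials -/

lemma linearIndependent_of_dual {ι V : Type*} [Fintype ι] [DecidableEq ι] [AddCommGroup V]
    [Module ℝ V] (b : ι → V) (L : ι → V →ₗ[ℝ] ℝ)
    (h : ∀ i j, L i (b j) = if i = j then 1 else 0) : LinearIndependent ℝ b := by
  rw [Fintype.linearIndependent_iff]
  intro c hc i
  have := congrArg (L i) hc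
  simpa [h] using this

/-- Integration against `f` over the sphere, as a linear functional on polynomials. -/
def sphPair {n : ℕ} [IsProbabilityMeasure (sphMeas n)] (f : MvPolynomial (Fin n) ℝ) :
    MvPolynomial (Fin n) ℝ →ₗ[ℝ] ℝ where
  toFun g := sphInner n f g
  map_add' g h := by
    have e : ∀ g, sphInner n f g = ∫ x, evalPt x (f * g) ∂(sphMeas n) := fun g => by
      simp only [evalPt_mul]; rfl
    rw [e, e, e, ← integral_add (integrable_evalPt _) (integrable_evalPt _)]
    simp only [evalPt, map_mul, map_add, mul_add]
  map_smul' c g := by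
    rw [sphInner_eq, sphInner_eq, RingHom.id_apply, smul_eq_mul, ← integral_const_mul]
    congr 1; ext x
    simp only [evalPt, MvPolynomial.smul_eval]; ring

instance finiteDimensional_harmSub (n l : ℕ) : FiniteDimensional ℝ (harmSub n l) :=
  have : FiniteDimensional ℝ (MvPolynomial.homogeneousSubmodule (Fin n) ℝ l) :=
    Module.Finite.iff_fg.2 (MvPolynomial.homogeneousSubmodule_fg (Fin n) ℝ l)
  Submodule.finiteDimensional_of_le (S₂ := MvPolynomial.homogeneousSubmodule (Fin n) ℝ l)
    inf_le_left

lemma exists_harm_coeff {n l : ℕ} [IsProbabilityMeasure (sphMeas n)]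
    (φ : Fin (Module.finrank ℝ (harmSub n l)) → MvPolynomial (Fin n) ℝ)
    (hφmem : ∀ i, φ i ∈ harmSub n l)
    (hφon : ∀ i i', sphInner n (φ i) (φ i') = if i = i' then 1 else 0)
    {h : MvPolynomial (Fin n) ℝ} (hh : h ∈ harmSub n l) :
    ∃ c : Fin (Module.finrank ℝ (harmSub n l)) → ℝ, h = ∑ i, c i • φ i := by
  have hli : LinearIndependent ℝ (fun i => (⟨φ i, hφmem i⟩ : harmSub n l)) :=
    linearIndependent_of_dual _ (fun i => (sphPair (φ i)).comp (harmSub n l).subtype)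
      fun i j => hφon i j
  have hspan := hli.span_eq_top_of_card_eq_finrank' (by simp)
  have hm : (⟨h, hh⟩ : harmSub n l) ∈ Submodule.span ℝ (Set.range fun i =>
    (⟨φ i, hφmem i⟩ : harmSub n l)) := by rw [hspan]; trivial
  obtain ⟨c, hc⟩ := (Submodule.mem_span_range_iff_exists_fun ℝ).1 hm
  refine ⟨c, ?_⟩
  have := congrArg Subtype.val hc
  simpa using this.symm

lemma harmSub_zero (n : ℕ) : harmSub n 0 = Submodule.span ℝ {1} := by
  ext f
  rw [Submodule.mem_span_singleton]
  constructor
  · rintro ⟨hf, -⟩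
    rw [SetLike.mem_coe, MvPolynomial.mem_homogeneousSubmodule,
      ← MvPolynomial.totalDegree_zero_iff_isHomogeneous,
      MvPolynomial.totalDegree_eq_zero_iff_eq_C] at hf
    exact ⟨MvPolynomial.coeff 0 f, by rw [MvPolynomial.smul_eq_C_mul, mul_one]; exact hf.symm⟩
  · rintro ⟨a, rfl⟩
    rw [MvPolynomial.smul_eq_C_mul, mul_one]
    exact ⟨(MvPolynomial.mem_homogeneousSubmodule _ _).2 (MvPolynomial.isHomogeneous_C _ _),
      by simp [lap_apply]⟩

lemma finrank_harmSub_zero (n : ℕ) : Module.finrank ℝ (harmSub n 0) = 1 := by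
  rw [harmSub_zero]; exact finrank_span_singleton one_ne_zero

lemma exists_eq_C {n : ℕ} {f : MvPolynomial (Fin n) ℝ} (hf : f ∈ harmSub n 0) :
    ∃ c, f = MvPolynomial.C c := by
  rw [harmSub_zero, Submodule.mem_span_singleton] at hf
  obtain ⟨a, rfl⟩ := hf
  exact ⟨a, by rw [MvPolynomial.smul_eq_C_mul, mul_one]⟩

/-- Normalizability of the constants forces the surface measure of the unit sphere to be finite
and nonzero. -/
lemma isProbabilityMeasure_of_orthonormal {n : ℕ}
    (φ : Fin (Module.finrank ℝ (harmSub n 0)) → MvPolynomial (Fin n) ℝ)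
    (hφmem : ∀ i, φ i ∈ harmSub n 0)
    (hφon : ∀ i i', sphInner n (φ i) (φ i') = if i = i' then 1 else 0) :
    IsProbabilityMeasure (sphMeas n) := by
  apply isProbabilityMeasure_sphMeas
  intro h
  let i : Fin (Module.finrank ℝ (harmSub n 0)) := ⟨0, by rw [finrank_harmSub_zero]; exact one_pos⟩
  obtain ⟨c, hc⟩ := exists_eq_C (hφmem i)
  have h1 := hφon i i
  rw [hc, sphInner_eq, if_pos rfl] at h1
  simp only [evalPt_C] at h1
  rw [← mul_one (c * c), integral_const_mul, h, mul_zero] at h1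
  exact zero_ne_one h1

lemma one_le_dim {n : ℕ} [IsProbabilityMeasure (sphMeas n)] : 1 ≤ n := by
  by_contra hn
  obtain rfl : n = 0 := by omega
  obtain ⟨x, hx⟩ := (ae_sphMeas 0).exists
  rw [Subsingleton.elim x 0, norm_zero] at hx
  exact zero_ne_one hx

lemma sphInner_C {n : ℕ} [IsProbabilityMeasure (sphMeas n)] (c d : ℝ) :
    sphInner n (MvPolynomial.C c) (MvPolynomial.C d) = c * d := by
  rw [sphInner_eq]; simp [evalPt_C]

lemma evalPt_zero {n l : ℕ} (hl : 1 ≤ l) {f : MvPolynomial (Fin n) ℝ} (hf : f.IsHomogeneous l) :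
    evalPt (0 : Euc n) f = 0 := by
  have := evalPt_smul hf 0 0
  rwa [smul_zero, zero_pow (by omega), zero_mul] at this

/-- Averages over a sphere of arbitrary radius reduce to the unit sphere. -/
lemma sphAvg_harm {n l m : ℕ} [IsProbabilityMeasure (sphMeas n)] {f g : MvPolynomial (Fin n) ℝ}
    (hf : f ∈ harmSub n l) (hg : g ∈ harmSub n m) {r : ℝ} (hr : 0 ≤ r) (q : ℝ → ℝ) :
    sphAvg n r (fun y => q (‖y‖ ^ 2) * (evalPt y f * evalPt y g))
      = q (r ^ 2) * r ^ (l + m) * sphInner n f g := by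
  have hf1 := (MvPolynomial.mem_homogeneousSubmodule _ _).1 hf.1
  have hg1 := (MvPolynomial.mem_homogeneousSubmodule _ _).1 hg.1
  rcases hr.eq_or_lt with rfl | hr
  · rw [sphAvg, if_pos rfl, norm_zero]
    rcases Nat.eq_zero_or_pos l with rfl | hl
    · rcases Nat.eq_zero_or_pos m with rfl | hm
      · obtain ⟨c, rfl⟩ := exists_eq_C hf
        obtain ⟨d, rfl⟩ := exists_eq_C hg
        simp [evalPt_C, sphInner_C]
      · rw [evalPt_zero hm hg1, zero_pow (show 0 + m ≠ 0 by omega)]; ring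
    · rw [evalPt_zero hl hf1, zero_pow (show l + m ≠ 0 by omega)]; ring
  · rw [sphAvg_eq one_le_dim hr, sphInner_eq, ← integral_const_mul]
    refine integral_congr_ae ?_
    filter_upwards [ae_sphMeas n] with x hx
    rw [norm_smul, hx, mul_one, Real.norm_eq_abs, sq_abs, evalPt_smul hf1, evalPt_smul hg1,
      pow_add]
    ring

/-- The addition formula, homogenized from the unit sphere. -/
lemma zonal {n l : ℕ} (hl : 1 ≤ l) {ι : Type*} [Fintype ι] (φ : ι → MvPolynomial (Fin n) ℝ)
    (hφ : ∀ i, φ i ∈ harmSub n l) (Q : Polynomial ℝ)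
    (hQ : ∀ u v : Euc n, ‖u‖ = 1 → ‖v‖ = 1 →
      (∑ i, evalPt u (φ i) * evalPt v (φ i)) = Q.eval ⟪u, v⟫) (u v : Euc n) :
    ∑ i, evalPt u (φ i) * evalPt v (φ i)
      = ‖u‖ ^ l * ‖v‖ ^ l * Q.eval (⟪u, v⟫ / (‖u‖ * ‖v‖)) := by
  have hφ1 := fun i => (MvPolynomial.mem_homogeneousSubmodule _ _).1 (hφ i).1
  by_cases hu : u = 0
  · subst hu
    simp [evalPt_zero hl (hφ1 _), zero_pow (show l ≠ 0 by omega)]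
  by_cases hv : v = 0
  · subst hv
    simp [evalPt_zero hl (hφ1 _), zero_pow (show l ≠ 0 by omega)]
  have hu' := norm_ne_zero_iff.2 hu
  have hv' := norm_ne_zero_iff.2 hv
  have h := hQ (‖u‖⁻¹ • u) (‖v‖⁻¹ • v) (by simp [norm_smul, hu']) (by simp [norm_smul, hv'])
  have e : ⟪‖u‖⁻¹ • u, ‖v‖⁻¹ • v⟫ = ⟪u, v⟫ / (‖u‖ * ‖v‖) := by
    rw [real_inner_smul_left, real_inner_smul_right]; field_simp
  rw [e] at h
  rw [← h, Finset.mul_sum]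
  refine Finset.sum_congr rfl fun i _ => ?_
  rw [evalPt_smul (hφ1 i), evalPt_smul (hφ1 i), inv_pow, inv_pow]
  field_simp

/-! ### Radial polynomials -/

lemma evalPt_aeval_nsq {n : ℕ} (x : Euc n) (q : Polynomial ℝ) :
    evalPt x (Polynomial.aeval (nsq n) q) = q.eval (‖x‖ ^ 2) := by
  have : evalPt x (Polynomial.aeval (nsq n) q)
      = MvPolynomial.aeval (fun i => x i) (Polynomial.aeval (nsq n) q) := by
    simp [evalPt, MvPolynomial.aeval_eq_eval]
  rw [this, ← Polynomial.aeval_algHom_apply]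
  have h2 : MvPolynomial.aeval (fun i => x i) (nsq n) = ‖x‖ ^ 2 := by
    rw [← evalPt_nsq]; simp [evalPt, MvPolynomial.aeval_eq_eval]
  rw [h2, Polynomial.coe_aeval_eq_eval]

lemma totalDegree_aeval_nsq (n : ℕ) (q : Polynomial ℝ) :
    (Polynomial.aeval (nsq n) q).totalDegree ≤ 2 * q.natDegree := by
  rw [Polynomial.aeval_eq_sum_range]
  refine (MvPolynomial.totalDegree_finsetSum _ _).trans (Finset.sup_le fun i hi => ?_)
  refine (MvPolynomial.totalDegree_smul_le _ _).trans ?_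
  refine (MvPolynomial.IsHomogeneous.totalDegree_le ((isHomogeneous_nsq n).pow i)).trans ?_
  have := Finset.mem_range.1 hi
  omega

lemma card_le_of_mul_eq_one {ι κ : Type*} [Fintype ι] [Fintype κ] [DecidableEq ι]
    (A : Matrix ι κ ℝ) (B : Matrix κ ι ℝ) (h : A * B = 1) : Fintype.card ι ≤ Fintype.card κ := by
  have h1 := Matrix.rank_mul_le_left A B
  rw [h, Matrix.rank_one] at h1
  exact h1.trans A.rank_le_card_width

lemma sum_radial {n : ℕ} (X : Finset (Euc n)) (w : Euc n → ℝ) (f : ℝ → ℝ) :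
    ∑ x ∈ X, w x * f ‖x‖
      = ∑ r ∈ X.image (fun x => ‖x‖), (∑ x ∈ X.filter (fun x => ‖x‖ = r), w x) * f r := by
  rw [← Finset.sum_fiberwise_of_maps_to (t := X.image (fun x => ‖x‖)) (g := fun x => ‖x‖)
    (fun x hx => Finset.mem_image_of_mem _ hx)]
  refine Finset.sum_congr rfl fun r _ => ?_
  rw [Finset.sum_mul]
  refine Finset.sum_congr rfl fun x hx => ?_
  rw [(Finset.mem_filter.1 hx).2]

section Radial

variable {n : ℕ} {X : Finset (Euc n)} {w : Euc n → ℝ} {p l : ℕ} {g : ℕ → Polynomial ℝ}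

/-- If `0 ∈ X` and `l ≥ 1` then `⟨·,·⟩_l` only sees the `p - 1` nonzero radii, so it admits no
orthonormal family of length `p`. -/
lemma not_orthonormal_of_zero_mem (hp : p = (X.image (fun x => ‖x‖)).card) (hl : 1 ≤ l)
    (h0 : (0 : Euc n) ∈ X)
    (hgon : ∀ j < p, ∀ j' < p,
      (∑ x ∈ X, w x * ‖x‖ ^ (2 * l) * (g j).eval (‖x‖ ^ 2) * (g j').eval (‖x‖ ^ 2))
        = if j = j' then 1 else 0) : False := by
  have hmem : (0 : ℝ) ∈ X.image (fun x => ‖x‖) := Finset.mem_image.2 ⟨0, h0, norm_zero⟩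
  set R := (X.image (fun x => ‖x‖)).erase 0 with hR
  let A : Matrix (Fin p) R ℝ := fun j r => (g j).eval (r.1 ^ 2)
  let B : Matrix R (Fin p) ℝ := fun r j => (∑ x ∈ X.filter (fun x => ‖x‖ = r.1), w x) *
    (r.1 ^ (2 * l) * (g j).eval (r.1 ^ 2))
  have hAB : A * B = 1 := by
    ext j j'
    have h := hgon j j.2 j' j'.2
    have h2 := sum_radial X w (fun r => r ^ (2 * l) * (g j).eval (r ^ 2) * (g j').eval (r ^ 2))
    rw [← Finset.add_sum_erase _ _ hmem] at h2
    simp only [zero_pow (show 2 * l ≠ 0 by omega), zero_mul, mul_zero, zero_add] at h2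
    simp only [← mul_assoc] at h2
    rw [h, ← hR, ← Finset.sum_coe_sort R] at h2
    rw [Matrix.mul_apply, Matrix.one_apply]
    simp only [Fin.ext_iff, h2, A, B]
    exact Finset.sum_congr rfl fun r _ => by ring
  have hc := card_le_of_mul_eq_one A B hAB
  rw [Fintype.card_fin, Fintype.card_coe, Finset.card_erase_of_mem hmem, ← hp] at hc
  have : 0 < p := hp ▸ Finset.card_pos.2 ⟨_, hmem⟩
  omega

/-- `g_0, …, g_{q-1}` is a basis of the polynomials of degree less than `q`. -/
lemma exists_radial_coeff
    (hgdeg : ∀ j < p, (g j).natDegree ≤ j)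
    (hgon : ∀ j < p, ∀ j' < p,
      (∑ x ∈ X, w x * ‖x‖ ^ (2 * l) * (g j).eval (‖x‖ ^ 2) * (g j').eval (‖x‖ ^ 2))
        = if j = j' then 1 else 0) {q : ℕ} (hq : q ≤ p) {P : Polynomial ℝ}
    (hP : P.degree < q) : ∃ c : Fin q → ℝ, P = ∑ j, c j • g j := by
  have hmem : ∀ j : Fin q, g j ∈ Polynomial.degreeLT ℝ q := fun j => by
    rw [Polynomial.mem_degreeLT]
    refine (Polynomial.degree_le_natDegree).trans_lt ?_
    exact_mod_cast (hgdeg j (j.2.trans_le hq)).trans_lt j.2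
  let L : Fin q → Polynomial ℝ →ₗ[ℝ] ℝ := fun j =>
    { toFun := fun f => ∑ x ∈ X, w x * ‖x‖ ^ (2 * l) * (g j).eval (‖x‖ ^ 2) * f.eval (‖x‖ ^ 2)
      map_add' := fun a b => by simp [mul_add, Finset.sum_add_distrib]
      map_smul' := fun c a => by
        simp only [Polynomial.eval_smul, smul_eq_mul, RingHom.id_apply, Finset.mul_sum]
        exact Finset.sum_congr rfl fun x _ => by ring }
  have hli : LinearIndependent ℝ (fun j : Fin q => (⟨g j, hmem j⟩ : Polynomial.degreeLT ℝ q)) := by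
    refine linearIndependent_of_dual _ (fun j => (L j).comp (Submodule.subtype _)) fun i j => ?_
    have := hgon i (i.2.trans_le hq) j (j.2.trans_le hq)
    simpa [L, Fin.ext_iff] using this
  have hfd : FiniteDimensional ℝ (Polynomial.degreeLT ℝ q) :=
    (Polynomial.degreeLTEquiv ℝ q).symm.finiteDimensional
  have hspan := hli.span_eq_top_of_card_eq_finrank'
    (by rw [(Polynomial.degreeLTEquiv ℝ q).finrank_eq]; simp)
  have hm : (⟨P, Polynomial.mem_degreeLT.2 hP⟩ : Polynomial.degreeLT ℝ q) ∈
    Submodule.span ℝ (Set.range fun j : Fin q => (⟨g j, hmem j⟩ : Polynomial.degreeLT ℝ q)) := by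
    rw [hspan]; trivial
  obtain ⟨c, hc⟩ := (Submodule.mem_span_range_iff_exists_fun ℝ).1 hm
  refine ⟨c, ?_⟩
  have := congrArg Subtype.val hc
  simpa using this.symm

/-- On the `p` spheres, `‖x‖^{2i}` is a combination of the `g_j` with `j ≤ i` and `j < p`: reduce
`t^i` modulo `∏ (t - r²)` when `i ≥ p`. -/
lemma exists_radial_coeff_on (hp : p = (X.image (fun x => ‖x‖)).card)
    (hgdeg : ∀ j < p, (g j).natDegree ≤ j)
    (hgon : ∀ j < p, ∀ j' < p,
      (∑ x ∈ X, w x * ‖x‖ ^ (2 * l) * (g j).eval (‖x‖ ^ 2) * (g j').eval (‖x‖ ^ 2))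
        = if j = j' then 1 else 0) {i m : ℕ} (hi : i < m) :
    ∃ c : Fin (min p m) → ℝ, ∀ r ∈ X.image (fun x => ‖x‖),
      (r ^ 2) ^ i = ∑ j, c j * (g j).eval (r ^ 2) := by
  obtain ⟨P, hPdeg, hP⟩ : ∃ P : Polynomial ℝ, P.degree < (min p m : ℕ) ∧
      ∀ r ∈ X.image (fun x => ‖x‖), (r ^ 2) ^ i = P.eval (r ^ 2) := by
    by_cases hip : i < p
    · refine ⟨Polynomial.X ^ i, ?_, fun r _ => by simp⟩
      rw [Polynomial.degree_X_pow]
      exact_mod_cast lt_min hip hi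
    · set D : Polynomial ℝ := ∏ r ∈ X.image (fun x => ‖x‖), (Polynomial.X - Polynomial.C (r ^ 2))
        with hD
      have hDm : D.Monic := Polynomial.monic_prod_of_monic _ _ fun r _ => Polynomial.monic_X_sub_C _
      have hDd : D.degree = p := by
        rw [Polynomial.degree_eq_natDegree hDm.ne_zero, hD, Polynomial.natDegree_prod_of_monic _ _
          fun r _ => Polynomial.monic_X_sub_C _]
        simp only [Polynomial.natDegree_X_sub_C]
        simp [hp]
      refine ⟨Polynomial.X ^ i %ₘ D, ?_, fun r hr => ?_⟩
      · rw [min_eq_left (by omega), ← hDd]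
        exact Polynomial.degree_modByMonic_lt _ hDm
      · have hz : D.eval (r ^ 2) = 0 := by
          rw [hD, Polynomial.eval_prod]
          exact Finset.prod_eq_zero hr (by simp)
        have h := congrArg (Polynomial.eval (r ^ 2)) (Polynomial.modByMonic_add_div
          (Polynomial.X ^ i) D)
        simpa [hz] using h.symm
  obtain ⟨c, hc⟩ := exists_radial_coeff hgdeg hgon (min_le_left p m) hPdeg
  refine ⟨c, fun r hr => ?_⟩
  rw [hP r hr, hc, Polynomial.eval_finsetSum]
  simp

end Radial

/-! ### The basis of `Pol_e(S)` and the kernel identity -/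

/-- By harmonic decomposition, a subspace contains `Pol_e(S)` as soon as it contains the
restrictions of all `|x|^{2j} h` with `h` harmonic of degree `l` and `2j + l ≤ e`. -/
lemma polOn_le {n e : ℕ} (hn : 1 ≤ n) (S : Set (Euc n)) (V : Submodule ℝ (S → ℝ))
    (hV : ∀ j l, 2 * j + l ≤ e → ∀ h ∈ harmSub n l, polyRestrict n S (nsq n ^ j * h) ∈ V) :
    PolOn n e S ≤ V := by
  rintro _ ⟨f, hf, rfl⟩
  rw [SetLike.mem_coe, MvPolynomial.mem_restrictTotalDegree] at hf
  rw [← MvPolynomial.sum_homogeneousComponent f, map_sum]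
  refine Submodule.sum_mem _ fun m hm => ?_
  have hme : m ≤ e := by have := Finset.mem_range.1 hm; omega
  have h := mem_harmSum hn m (MvPolynomial.homogeneousComponent_isHomogeneous m f)
  have hle : harmSum n m ≤ V.comap (polyRestrict n S) := by
    refine Submodule.span_le.2 ?_
    rintro _ ⟨j, l, h, hjl, hh, rfl⟩
    exact hV j l (hjl.trans_le hme) h hh
  exact hle h

lemma norm_mem_of_mem_suppSpheres {n : ℕ} {X : Finset (Euc n)} {x : Euc n}
    (hx : x ∈ suppSpheres n X) : ‖x‖ ∈ X.image (fun x => ‖x‖) := by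
  simp only [suppSpheres, Set.mem_iUnion, mem_sphere_iff_norm, sub_zero, exists_prop] at hx
  obtain ⟨r, hr, rfl⟩ := hx
  exact hr

/-- Lemma 2.16(2). Let `(X, w)` be a tight Euclidean `2e`-design on
`p` concentric spheres, with `g_{l,j}`, `φ_{l,i}` and `Q_l` as in Lemma 2.16(1). Then for
any distinct `u, v ∈ X`,
`∑_{1 ≤ l ≤ e} ∑_{0 ≤ j ≤ min{p-ε_S-1, ⌊(e-l)/2⌋}}
   ‖u‖^l ‖v‖^l g_{l,j}(u) g_{l,j}(v) Q_l(⟨u,v⟩/(‖u‖‖v‖))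
 + ∑_{0 ≤ j ≤ min{p-1, ⌊e/2⌋}} g_{0,j}(u) g_{0,j}(v) = 0`
(if `u = 0` or `v = 0` each term of the first sum vanishes, since `‖u‖^l ‖v‖^l = 0`). -/
theorem tight_design_annihilator_identity (n e : ℕ)
    (X : Finset (Euc n)) (w : Euc n → ℝ)
    (hne : X.Nonempty) (hw : ∀ x ∈ X, 0 < w x)
    (ht : IsTightOnS n e X w)
    (p : ℕ) (hp : p = (X.image (fun x => ‖x‖)).card)
    (ε : ℕ) (hε : ε = if (0 : Euc n) ∈ X then 1 else 0)
    (g : ℕ → ℕ → Polynomial ℝ)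
    (hgdeg : ∀ l ≤ e, ∀ j < p, (g l j).natDegree ≤ j)
    (hgon : ∀ l ≤ e, ∀ j < p, ∀ j' < p,
      (∑ x ∈ X, w x * ‖x‖ ^ (2 * l) * (g l j).eval (‖x‖ ^ 2) * (g l j').eval (‖x‖ ^ 2))
        = if j = j' then 1 else 0)
    (φ : (l : ℕ) → Fin (Module.finrank ℝ (harmSub n l)) → MvPolynomial (Fin n) ℝ)
    (hφmem : ∀ l, ∀ i, φ l i ∈ harmSub n l)
    (hφon : ∀ l, ∀ i i', sphInner n (φ l i) (φ l i') = if i = i' then 1 else 0)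
    (Q : ℕ → Polynomial ℝ)
    (hQ : ∀ l : ℕ, ∀ u v : Euc n, ‖u‖ = 1 → ‖v‖ = 1 →
      (∑ i, evalPt u (φ l i) * evalPt v (φ l i)) = (Q l).eval ⟪u, v⟫) :
    ∀ u ∈ X, ∀ v ∈ X, u ≠ v →
      (∑ l ∈ Finset.Icc 1 e, ∑ j ∈ Finset.range (min (p - ε) ((e - l) / 2 + 1)),
          ‖u‖ ^ l * ‖v‖ ^ l * (g l j).eval (‖u‖ ^ 2) * (g l j).eval (‖v‖ ^ 2) *
            (Q l).eval (⟪u, v⟫ / (‖u‖ * ‖v‖)))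
        + (∑ j ∈ Finset.range (min p (e / 2 + 1)),
            (g 0 j).eval (‖u‖ ^ 2) * (g 0 j).eval (‖v‖ ^ 2))
      = 0 := by
  have : IsProbabilityMeasure (sphMeas n) :=
    isProbabilityMeasure_of_orthonormal (φ 0) (hφmem 0) (hφon 0)
  have hn : 1 ≤ n := one_le_dim
  -- the indices of the functions `g_{l,j}(‖x‖²) φ_{l,i}(x)`
  let K := Σ l : Fin (e + 1), Fin (min p ((e - l) / 2 + 1)) ×
    Fin (Module.finrank ℝ (harmSub n l))
  let F : K → MvPolynomial (Fin n) ℝ := fun k =>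
    Polynomial.aeval (nsq n) (g k.1 k.2.1) * φ k.1 k.2.2
  have hFeval : ∀ k x, evalPt x (F k)
      = (g k.1 k.2.1).eval (‖x‖ ^ 2) * evalPt x (φ k.1 k.2.2) := fun k x => by
    rw [evalPt_mul, evalPt_aeval_nsq]
  have hjp : ∀ k : K, (k.2.1 : ℕ) < p := fun k => k.2.1.2.trans_le (min_le_left _ _)
  have hle : ∀ k : K, (k.1 : ℕ) ≤ e := fun k => Nat.lt_succ_iff.1 k.1.2
  have hFdeg : ∀ k, (F k).totalDegree ≤ e := fun k => by
    refine (MvPolynomial.totalDegree_mul _ _).trans ?_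
    have h1 := (totalDegree_aeval_nsq n (g k.1 k.2.1)).trans
      (Nat.mul_le_mul_left 2 (hgdeg k.1 (hle k) k.2.1 (hjp k)))
    have h2 := MvPolynomial.IsHomogeneous.totalDegree_le
      ((MvPolynomial.mem_homogeneousSubmodule _ _).1 (hφmem k.1 k.2.2).1)
    have h3 : (k.2.1 : ℕ) < (e - k.1) / 2 + 1 := k.2.1.2.trans_le (min_le_right _ _)
    have h4 := hle k
    omega
  -- orthonormality: the design property turns sums over `X` into spherical averages
  have hFon : ∀ k k', ∑ x ∈ X, w x * (evalPt x (F k) * evalPt x (F k'))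
      = if k = k' then 1 else 0 := by
    intro k k'
    have hd := ht.1 (F k * F k') ((MvPolynomial.totalDegree_mul _ _).trans (by
      have := hFdeg k; have := hFdeg k'; omega))
    have hs : ∀ r ∈ X.image (fun x => ‖x‖), sphAvg n r (fun y => evalPt y (F k * F k'))
        = ((g k.1 k.2.1).eval (r ^ 2) * (g k'.1 k'.2.1).eval (r ^ 2)) * r ^ (k.1 + k'.1 : ℕ)
          * sphInner n (φ k.1 k.2.2) (φ k'.1 k'.2.2) := by
      intro r hr
      obtain ⟨x, -, rfl⟩ := Finset.mem_image.1 hr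
      rw [← sphAvg_harm (hφmem k.1 k.2.2) (hφmem k'.1 k'.2.2) (norm_nonneg x)
        (fun t => (g k.1 k.2.1).eval t * (g k'.1 k'.2.1).eval t)]
      congr 1
      ext y
      rw [evalPt_mul, hFeval, hFeval]
      ring
    rw [Finset.sum_congr rfl fun r hr => by rw [hs r hr],
      ← sum_radial X w (fun r => ((g k.1 k.2.1).eval (r ^ 2) * (g k'.1 k'.2.1).eval (r ^ 2))
        * r ^ (k.1 + k'.1 : ℕ) * sphInner n (φ k.1 k.2.2) (φ k'.1 k'.2.2))] at hd
    simp only [evalPt_mul _ (F k')] at hd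
    rw [← hd]
    obtain ⟨l, j, i⟩ := k
    obtain ⟨l', j', i'⟩ := k'
    by_cases hl : l = l'
    · subst hl
      have h := hgon l (hle ⟨l, j, i⟩) j (hjp ⟨l, j, i⟩) j' (hjp ⟨l, j', i'⟩)
      have h2 : ∑ x ∈ X, w x * (((g l j).eval (‖x‖ ^ 2) * (g l j').eval (‖x‖ ^ 2))
          * ‖x‖ ^ (l + l : ℕ) * sphInner n (φ l i) (φ l i'))
          = (if (j : ℕ) = j' then 1 else 0) * (if i = i' then 1 else 0) := by
        rw [← h, ← hφon l i i', Finset.sum_mul]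
        refine Finset.sum_congr rfl fun x _ => ?_
        rw [← two_mul]; ring
      have hiff : ((⟨l, (j, i)⟩ : K) = ⟨l, (j', i')⟩) ↔ (j = j' ∧ i = i') := by
        constructor
        · intro h
          have h3 := eq_of_heq (Sigma.mk.inj_iff.1 h).2
          exact ⟨congrArg Prod.fst h3, congrArg Prod.snd h3⟩
        · rintro ⟨rfl, rfl⟩; rfl
      refine h2.trans ?_
      refine Eq.trans ?_ (if_congr hiff rfl rfl).symm
      by_cases hj : j = j' <;> by_cases hi : i = i' <;> simp [← Fin.ext_iff, hj, hi]
    · have hl' : (l : ℕ) ≠ l' := fun h => hl (Fin.ext h)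
      simp only [sphInner_harm_ne hn hl' (hφmem l i) (hφmem l' i'), mul_zero,
        Finset.sum_const_zero]
      rw [if_neg]
      intro h
      exact hl (congrArg Sigma.fst h)
  -- spanning
  set S := suppSpheres n X with hS
  have hspan : PolOn n e S ≤ Submodule.span ℝ (Set.range fun k => polyRestrict n S (F k)) := by
    refine polOn_le hn S _ fun j l hjl h hh => ?_
    obtain ⟨c, rfl⟩ := exists_harm_coeff (φ l) (hφmem l) (hφon l) hh
    obtain ⟨d, hd⟩ := exists_radial_coeff_on hp (hgdeg l (by omega)) (hgon l (by omega))
      (show j < (e - l) / 2 + 1 by omega)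
    have e1 : polyRestrict n S (nsq n ^ j * ∑ i, c i • φ l i)
        = ∑ a, ∑ i, (d a * c i) • polyRestrict n S (F ⟨⟨l, by omega⟩, a, i⟩) := by
      ext x
      have hx := hd ‖x.1‖ (norm_mem_of_mem_suppSpheres x.2)
      have e2 : polyRestrict n S (nsq n ^ j * ∑ i, c i • φ l i) x
          = (∑ a, d a * (g l a).eval (‖x.1‖ ^ 2)) * ∑ i, c i * evalPt x.1 (φ l i) := by
        rw [← hx, ← evalPt_nsq]
        simp [polyRestrict, evalPt]
      rw [e2, Finset.sum_mul_sum, Finset.sum_apply]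
      refine Finset.sum_congr rfl fun a _ => ?_
      rw [Finset.sum_apply]
      refine Finset.sum_congr rfl fun i _ => ?_
      rw [Pi.smul_apply, smul_eq_mul]
      change _ = d a * c i * evalPt x.1 (F ⟨⟨l, by omega⟩, a, i⟩)
      rw [hFeval]
      ring
    rw [e1]
    exact Submodule.sum_mem _ fun a _ => Submodule.sum_mem _ fun i _ =>
      Submodule.smul_mem _ _ (Submodule.subset_span ⟨_, rfl⟩)
  -- tightness makes the orthonormal family complete, so its matrix is square
  let A : Matrix K X ℝ := fun k x => evalPt x.1 (F k)
  let B : Matrix X K ℝ := fun x k => w x.1 * evalPt x.1 (F k)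
  have hAB : A * B = 1 := by
    ext k k'
    rw [Matrix.mul_apply, Matrix.one_apply, ← hFon k k', ← Finset.sum_coe_sort X]
    exact Finset.sum_congr rfl fun x _ => by simp only [A, B]; ring
  have hcard : Fintype.card K = Fintype.card X := by
    refine le_antisymm (card_le_of_mul_eq_one A B hAB) ?_
    rw [Fintype.card_coe, ht.2]
    have hfd := FiniteDimensional.span_of_finite ℝ
      (Set.finite_range fun k => polyRestrict n S (F k))
    exact (Submodule.finrank_mono hspan).trans (finrank_range_le_card _)
  have hBA : B * A = 1 := (Matrix.mul_eq_one_comm_of_card_eq _ _ _ hcard).1 hAB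
  intro u hu v hv huv
  have hker : ∑ k, evalPt u (F k) * evalPt v (F k) = 0 := by
    have h := congrFun (congrFun hBA ⟨u, hu⟩) ⟨v, hv⟩
    rw [Matrix.mul_apply, Matrix.one_apply, if_neg (by simpa using huv)] at h
    simp only [A, B, mul_assoc, ← Finset.mul_sum] at h
    exact (mul_eq_zero.1 h).resolve_left (hw u hu).ne'
  have hker2 : ∑ l ∈ Finset.range (e + 1), ∑ j ∈ Finset.range (min p ((e - l) / 2 + 1)),
      (g l j).eval (‖u‖ ^ 2) * (g l j).eval (‖v‖ ^ 2) *
        ∑ i, evalPt u (φ l i) * evalPt v (φ l i) = 0 := by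
    rw [← hker, Fintype.sum_sigma, ← Fin.sum_univ_eq_sum_range (fun l =>
      ∑ j ∈ Finset.range (min p ((e - l) / 2 + 1)), (g l j).eval (‖u‖ ^ 2) *
        (g l j).eval (‖v‖ ^ 2) * ∑ i, evalPt u (φ l i) * evalPt v (φ l i))]
    refine Finset.sum_congr rfl fun l _ => ?_
    rw [Fintype.sum_prod_type, ← Fin.sum_univ_eq_sum_range (fun j => (g l j).eval (‖u‖ ^ 2) *
        (g l j).eval (‖v‖ ^ 2) * ∑ i, evalPt u (φ l i) * evalPt v (φ l i))]
    refine Finset.sum_congr rfl fun j _ => ?_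
    rw [Finset.mul_sum]
    refine Finset.sum_congr rfl fun i _ => ?_
    rw [hFeval, hFeval]
    ring
  have hzero : ∑ i, evalPt u (φ 0 i) * evalPt v (φ 0 i) = 1 := by
    have hsub : ∀ i, evalPt u (φ 0 i) * evalPt v (φ 0 i) = 1 := fun i => by
      obtain ⟨c, hc⟩ := exists_eq_C (hφmem 0 i)
      have h := hφon 0 i i
      rw [if_pos rfl, hc, sphInner_C] at h
      rw [hc, evalPt_C, evalPt_C, h]
    simp [hsub, finrank_harmSub_zero]
  rw [Finset.range_eq_Ico, Finset.sum_eq_sum_Ico_succ_bot (Nat.succ_pos e), hzero] at hker2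
  simp only [mul_one, Nat.sub_zero, zero_add] at hker2
  rw [← hker2, add_comm]
  congr 1
  refine Finset.sum_congr (by ext l; simp only [Finset.mem_Icc, Finset.mem_Ico]; omega) fun l hl => ?_
  have hl1 := (Finset.mem_Ico.1 hl).1
  have hl2 := (Finset.mem_Ico.1 hl).2
  have hε0 : ε = 0 := by
    rw [hε, if_neg]
    intro h0
    exact not_orthonormal_of_zero_mem hp hl1 h0 (hgon l (by omega))
  rw [hε0, Nat.sub_zero]
  refine Finset.sum_congr rfl fun j _ => ?_
  rw [zonal hl1 (φ l) (hφmem l) (Q l) (hQ l) u v]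
  ring

end
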